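/- arXiv:2004.14726 — 5 statements merged into one kernel-verified Lean document; each statement's English description precedes it below -/
import Mathlib

section
/- Let s ≥ 1 be an integer, q₀ = 2^s and q = 2q₀². For nonnegative integers a₁,a₂,a₃,a₄,f write σ = a₁+a₂+a₃+a₄+f and ν = a₁ + a₂q₀ + 2a₃q₀ + a₄q + fq². Define the sets F₁,…,F₆ of natural numbers: F₁ = {ν+1 : 0≤a₁≤q₀−1, 0≤a₂≤1, 0≤a₃≤q₀−1, a₄≥0, f≥0, σ≤q−2}; F₂ = {ν+(n+1)q₀q+1 : 1≤n≤2q₀−2, 0≤a₁≤q₀−1, 0≤a₂≤1, 0≤a₃≤q₀−1, 0≤a₄≤q−q₀−1−nq₀, f≥0, σ=q−q₀−2−nq₀+n}; F₃ = {ν+(2n+1)q₀q+n+2 : 0≤n≤q₀−2, 0≤a₁≤q₀−2−n, 0≤a₂≤1, 0≤a₃≤q₀−1, 0≤a₄≤q₀−1, f≥0, σ=q−q₀−2−2nq₀+n}; F₄ = {ν+(2n+2)q₀q+n+3 : 0≤n≤q₀−3, 0≤a₁≤q₀−3−n, 0≤a₂≤1, 0≤a₃≤q₀−1, 0≤a₄≤q₀−1,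 f≥0, σ=q−2q₀−2−2nq₀+n}; F₅ = {ν+cq₀(q+1)+d(2qq₀+2q₀+1)+1 : a₁=0, 0≤c≤1, 0≤a₂≤1−c, 1−c≤d≤q₀−1, 0≤a₃≤q₀−1−d, 0≤a₄≤q₀−1, f≥0, σ=q−2−2dq₀−cq₀}; F₆ = {ν+q₀+(2n+2)q₀q+n+2 : a₁=0, a₂=0, 0≤n≤q₀−2, 0≤a₃≤n, 0≤a₄≤q₀−1, f≥0, σ=q−2q₀−2−2nq₀+n}. Then the union F = F₁ ∪ F₂ ∪ F₃ ∪ F₄ ∪ F₅ ∪ F₆ has exactly q(q−1)²/2 elements. -/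
/-- `ν = a₁ + a₂q₀ + 2a₃q₀ + a₄q + fq²`. -/
def nuF (q₀ q a₁ a₂ a₃ a₄ f : ℕ) : ℕ :=
  a₁ + a₂ * q₀ + 2 * a₃ * q₀ + a₄ * q + f * q ^ 2

/-- `F₁ = {ν+1 : 0≤a₁≤q₀−1, 0≤a₂≤1, 0≤a₃≤q₀−1, a₄≥0, f≥0, σ≤q−2}`. -/
def F1 (q₀ q : ℕ) : Set ℕ :=
  {v | ∃ a₁ a₂ a₃ a₄ f : ℕ,
    a₁ + 1 ≤ q₀ ∧ a₂ ≤ 1 ∧ a₃ + 1 ≤ q₀ ∧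
    a₁ + a₂ + a₃ + a₄ + f + 2 ≤ q ∧
    v = nuF q₀ q a₁ a₂ a₃ a₄ f + 1}

/-- `F₂ = {ν+(n+1)q₀q+1 : 1≤n≤2q₀−2, 0≤a₁≤q₀−1, 0≤a₂≤1, 0≤a₃≤q₀−1,
0≤a₄≤q−q₀−1−nq₀, f≥0, σ=q−q₀−2−nq₀+n}` (bounds and the equation for `σ`
written additively to avoid truncated subtraction). -/
def F2 (q₀ q : ℕ) : Set ℕ :=
  {v | ∃ n a₁ a₂ a₃ a₄ f : ℕ,
    1 ≤ n ∧ n + 2 ≤ 2 * q₀ ∧ a₁ + 1 ≤ q₀ ∧ a₂ ≤ 1 ∧ a₃ + 1 ≤ q₀ ∧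
    a₄ + n * q₀ + q₀ + 1 ≤ q ∧
    a₁ + a₂ + a₃ + a₄ + f + q₀ + 2 + n * q₀ = q + n ∧
    v = nuF q₀ q a₁ a₂ a₃ a₄ f + (n + 1) * q₀ * q + 1}

/-- `F₃ = {ν+(2n+1)q₀q+n+2 : 0≤n≤q₀−2, 0≤a₁≤q₀−2−n, 0≤a₂≤1, 0≤a₃≤q₀−1,
0≤a₄≤q₀−1, f≥0, σ=q−q₀−2−2nq₀+n}`. -/
def F3 (q₀ q : ℕ) : Set ℕ :=
  {v | ∃ n a₁ a₂ a₃ a₄ f : ℕ,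
    n + 2 ≤ q₀ ∧ a₁ + n + 2 ≤ q₀ ∧ a₂ ≤ 1 ∧ a₃ + 1 ≤ q₀ ∧ a₄ + 1 ≤ q₀ ∧
    a₁ + a₂ + a₃ + a₄ + f + q₀ + 2 + 2 * n * q₀ = q + n ∧
    v = nuF q₀ q a₁ a₂ a₃ a₄ f + (2 * n + 1) * q₀ * q + n + 2}

/-- `F₄ = {ν+(2n+2)q₀q+n+3 : 0≤n≤q₀−3, 0≤a₁≤q₀−3−n, 0≤a₂≤1, 0≤a₃≤q₀−1,
0≤a₄≤q₀−1, f≥0, σ=q−2q₀−2−2nq₀+n}`. -/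
def F4 (q₀ q : ℕ) : Set ℕ :=
  {v | ∃ n a₁ a₂ a₃ a₄ f : ℕ,
    n + 3 ≤ q₀ ∧ a₁ + n + 3 ≤ q₀ ∧ a₂ ≤ 1 ∧ a₃ + 1 ≤ q₀ ∧ a₄ + 1 ≤ q₀ ∧
    a₁ + a₂ + a₃ + a₄ + f + 2 * q₀ + 2 + 2 * n * q₀ = q + n ∧
    v = nuF q₀ q a₁ a₂ a₃ a₄ f + (2 * n + 2) * q₀ * q + n + 3}

/-- `F₅ = {ν+cq₀(q+1)+d(2qq₀+2q₀+1)+1 : a₁=0, 0≤c≤1, 0≤a₂≤1−c, 1−c≤d≤q₀−1,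
0≤a₃≤q₀−1−d, 0≤a₄≤q₀−1, f≥0, σ=q−2−2dq₀−cq₀}`. -/
def F5 (q₀ q : ℕ) : Set ℕ :=
  {v | ∃ c d a₁ a₂ a₃ a₄ f : ℕ,
    a₁ = 0 ∧ c ≤ 1 ∧ a₂ + c ≤ 1 ∧ 1 ≤ d + c ∧ d + 1 ≤ q₀ ∧
    a₃ + d + 1 ≤ q₀ ∧ a₄ + 1 ≤ q₀ ∧
    a₁ + a₂ + a₃ + a₄ + f + 2 + 2 * d * q₀ + c * q₀ = q ∧
    v = nuF q₀ q a₁ a₂ a₃ a₄ f + c * q₀ * (q + 1) + d * (2 * q * q₀ + 2 * q₀ + 1) + 1}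

/-- `F₆ = {ν+q₀+(2n+2)q₀q+n+2 : a₁=0, a₂=0, 0≤n≤q₀−2, 0≤a₃≤n, 0≤a₄≤q₀−1,
f≥0, σ=q−2q₀−2−2nq₀+n}`. -/
def F6 (q₀ q : ℕ) : Set ℕ :=
  {v | ∃ n a₁ a₂ a₃ a₄ f : ℕ,
    a₁ = 0 ∧ a₂ = 0 ∧ n + 2 ≤ q₀ ∧ a₃ ≤ n ∧ a₄ + 1 ≤ q₀ ∧
    a₁ + a₂ + a₃ + a₄ + f + 2 * q₀ + 2 + 2 * n * q₀ = q + n ∧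
    v = nuF q₀ q a₁ a₂ a₃ a₄ f + q₀ + (2 * n + 2) * q₀ * q + n + 2}

def thrF (b₁ b₂ b₃ : ℕ) : ℕ := 2 * b₁ + b₂ + (if b₁ ≤ b₃ then 1 else 0)

def tF (b₁ b₂ b₃ m : ℕ) : ℕ := if thrF b₁ b₂ b₃ ≤ m then 1 else 0

def encF (k : ℕ) (b₁ b₂ b₃ m a f : ℕ) : ℕ :=
  b₁ + k * (b₂ + 2 * (b₃ + k * (a + k * (m + (2 * k) * f)))) + 1

def cntF (k b₁ b₂ b₃ m a : ℕ) : ℕ :=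
  (2 * k ^ 2 - 1 + m) - (m * k + a + b₁ + b₂ + b₃ + tF b₁ b₂ b₃ m)

lemma digit_inj {k x y x' y' : ℕ} (hx : x < k) (hx' : x' < k) (h : x + k * y = x' + k * y') :
    x = x' ∧ y = y' := by
  have h1 : x = x' := by
    have := congrArg (· % k) h
    simpa [Nat.add_mul_mod_self_left, Nat.mod_eq_of_lt hx, Nat.mod_eq_of_lt hx'] using this
  subst h1
  refine ⟨rfl, ?_⟩
  have : k * y = k * y' := by omega
  exact Nat.eq_of_mul_eq_mul_left (by omega) this

lemma enc_inj {k b₁ b₂ b₃ m a f b₁' b₂' b₃' m' a' f' : ℕ}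
    (h1 : b₁ < k) (h2 : b₂ < 2) (h3 : b₃ < k) (h4 : m < 2 * k) (h5 : a < k)
    (h1' : b₁' < k) (h2' : b₂' < 2) (h3' : b₃' < k) (h4' : m' < 2 * k) (h5' : a' < k)
    (h : encF k b₁ b₂ b₃ m a f = encF k b₁' b₂' b₃' m' a' f') :
    b₁ = b₁' ∧ b₂ = b₂' ∧ b₃ = b₃' ∧ m = m' ∧ a = a' ∧ f = f' := by
  unfold encF at h
  obtain ⟨e1, h⟩ := digit_inj h1 h1' (Nat.succ_injective h)
  obtain ⟨e2, h⟩ := digit_inj h2 h2' h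
  obtain ⟨e3, h⟩ := digit_inj h3 h3' h
  obtain ⟨e5, h⟩ := digit_inj h5 h5' h
  obtain ⟨e4, h⟩ := digit_inj h4 h4' h
  exact ⟨e1, e2, e3, e4, e5, h⟩

def IdxF (k : ℕ) : Finset ((_ : ℕ × ℕ × ℕ × ℕ × ℕ) × ℕ) :=
  (Finset.range k ×ˢ Finset.range 2 ×ˢ Finset.range k ×ˢ Finset.range (2 * k) ×ˢ
    Finset.range k).sigma
    (fun p => Finset.range (cntF k p.1 p.2.1 p.2.2.1 p.2.2.2.1 p.2.2.2.2))

lemma cnt_cast {k b₁ b₂ b₃ m a : ℕ}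
    (h1 : b₁ < k) (h2 : b₂ < 2) (h3 : b₃ < k) (h4 : m < 2 * k) (h5 : a < k) :
    m * k + a + b₁ + b₂ + b₃ + tF b₁ b₂ b₃ m ≤ 2 * k ^ 2 - 1 + m ∧ 1 ≤ 2 * k ^ 2 := by
  have hk : 1 ≤ 2 * k ^ 2 := by nlinarith
  refine ⟨?_, hk⟩
  obtain ⟨j, rfl⟩ : ∃ j, k = j + 1 := ⟨k - 1, by omega⟩
  have h7 : m * j ≤ (2 * j + 1) * j := Nat.mul_le_mul_right _ (by omega)
  suffices m * (j + 1) + a + b₁ + b₂ + b₃ + tF b₁ b₂ b₃ m + 1 ≤ 2 * (j + 1) ^ 2 + m by omega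
  unfold tF thrF
  by_cases hm : m = 2 * j + 1
  · subst hm
    split_ifs <;> nlinarith
  · have h8 : m * j ≤ (2 * j) * j := Nat.mul_le_mul_right _ (by omega)
    have : (if 2 * b₁ + b₂ + (if b₁ ≤ b₃ then 1 else 0) ≤ m then 1 else 0) ≤ 1 := by
      split_ifs <;> omega
    by_cases hj : j = 0
    · subst hj
      have : m = 0 := by omega
      subst this
      have : b₁ = 0 := by omega
      subst this
      simp
      omega
    · have hj' : 1 ≤ j := by omega
      nlinarith

lemma sum_lin (n : ℕ) (α β : ℤ) :
    2 * ∑ i ∈ Finset.range n, (α + β * (i : ℤ)) = 2 * n * α + β * n * (n - 1) := by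
  induction n with
  | zero => simp
  | succ n ih => rw [Finset.sum_range_succ, mul_add, ih]; push_cast; ring

lemma sum_thr (n t : ℕ) (h : t ≤ n) :
    ∑ i ∈ Finset.range n, (if t ≤ i then (1 : ℤ) else 0) = n - t := by
  induction n, h using Nat.le_induction with
  | base =>
    rw [sub_self]
    apply Finset.sum_eq_zero
    intro i hi
    rw [if_neg]
    simpa using hi
  | succ n hn ih => rw [Finset.sum_range_succ, ih, if_pos hn]; push_cast; ring

lemma card_Idx (k : ℕ) :
    2 * ((IdxF k).card : ℤ) = (2 * k ^ 2) * (2 * k ^ 2 - 1) ^ 2 := by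
  have e1 : ((IdxF k).card : ℤ) = ∑ b₁ ∈ Finset.range k, ∑ b₂ ∈ Finset.range 2,
      ∑ b₃ ∈ Finset.range k, ∑ m ∈ Finset.range (2 * k), ∑ a ∈ Finset.range k,
        (((2 * k ^ 2 - 1 - b₁ - b₂ - b₃ : ℤ) + (1 - k) * m -
          (if thrF b₁ b₂ b₃ ≤ m then 1 else 0)) + (-1) * (a : ℤ)) := by
    unfold IdxF
    rw [Finset.card_sigma]
    simp only [Finset.card_range, Finset.sum_product]
    push_cast
    refine Finset.sum_congr rfl fun b₁ h1 => Finset.sum_congr rfl fun b₂ h2 =>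
      Finset.sum_congr rfl fun b₃ h3 => Finset.sum_congr rfl fun m h4 =>
      Finset.sum_congr rfl fun a h5 => ?_
    rw [Finset.mem_range] at h1 h2 h3 h4 h5
    obtain ⟨h, h'⟩ := cnt_cast h1 h2 h3 h4 h5
    unfold cntF
    rw [Nat.cast_sub h]
    push_cast [Nat.cast_sub h']
    unfold tF
    push_cast
    ring
  have e2 : ∀ b₁ ∈ Finset.range k, ∀ b₂ ∈ Finset.range 2, ∀ b₃ ∈ Finset.range k,
      2 * ∑ m ∈ Finset.range (2 * k), ∑ a ∈ Finset.range k,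
        (((2 * k ^ 2 - 1 - b₁ - b₂ - b₃ : ℤ) + (1 - k) * m -
          (if thrF b₁ b₂ b₃ ≤ m then 1 else 0)) + (-1) * (a : ℤ)) =
      ((4 * (k : ℤ) ^ 2 * (2 * k ^ 2 - 1 - b₁ - b₂ : ℤ) + 2 * k ^ 2 * (1 - k) * (2 * k - 1)
        - 2 * k ^ 2 * (k - 1) - 2 * k * (2 * k - 2 * b₁ - b₂)) + (- 4 * (k : ℤ) ^ 2) * (b₃ : ℤ))
        + 2 * k * (if b₁ ≤ b₃ then (1 : ℤ) else 0) := by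
    intro b₁ h1 b₂ h2 b₃ h3
    rw [Finset.mem_range] at h1 h2 h3
    rw [Finset.mul_sum]
    simp_rw [sum_lin]
    have hT : thrF b₁ b₂ b₃ ≤ 2 * k := by unfold thrF; split_ifs <;> omega
    have s1 := sum_thr (2 * k) (thrF b₁ b₂ b₃) hT
    have s2 := sum_lin (2 * k) (2 * k ^ 2 - 1 - b₁ - b₂ - b₃ : ℤ) (1 - k)
    have s3 : ((thrF b₁ b₂ b₃ : ℕ) : ℤ) = 2 * b₁ + b₂ + (if b₁ ≤ b₃ then 1 else 0) := by
      unfold thrF; push_cast; rfl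
    rw [Finset.sum_add_distrib, ← Finset.mul_sum, Finset.sum_sub_distrib, s1]
    rw [s3, Finset.sum_const, Finset.card_range, nsmul_eq_mul]
    push_cast at s2 ⊢
    linear_combination (k : ℤ) * s2
  have e3 : ∀ b₁ ∈ Finset.range k, ∀ b₂ ∈ Finset.range 2,
      2 * ∑ b₃ ∈ Finset.range k, (((4 * (k : ℤ) ^ 2 * (2 * k ^ 2 - 1 - b₁ - b₂ : ℤ)
        + 2 * k ^ 2 * (1 - k) * (2 * k - 1)
        - 2 * k ^ 2 * (k - 1) - 2 * k * (2 * k - 2 * b₁ - b₂)) + (- 4 * (k : ℤ) ^ 2) * (b₃ : ℤ))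
        + 2 * k * (if b₁ ≤ b₃ then (1 : ℤ) else 0)) =
      2 * (k : ℤ) * (4 * k ^ 2 * (2 * k ^ 2 - 1 - b₁ - b₂ : ℤ)
        + 2 * k ^ 2 * (1 - k) * (2 * k - 1)
        - 2 * k ^ 2 * (k - 1) - 2 * k * (2 * k - 2 * b₁ - b₂)) + (- 4 * (k : ℤ) ^ 2) * k * (k - 1)
        + 4 * k * (k - b₁) := by
    intro b₁ h1 b₂ h2
    rw [Finset.mem_range] at h1
    rw [Finset.sum_add_distrib, mul_add, sum_lin, ← Finset.mul_sum, sum_thr k b₁ h1.le]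
    ring
  have e4 : 2 * (2 * ((IdxF k).card : ℤ)) = ∑ b₁ ∈ Finset.range k, ∑ b₂ ∈ Finset.range 2,
      (2 * k * (4 * k ^ 2 * (2 * k ^ 2 - 1 - b₁ - b₂ : ℤ)
        + 2 * k ^ 2 * (1 - k) * (2 * k - 1)
        - 2 * k ^ 2 * (k - 1) - 2 * k * (2 * k - 2 * b₁ - b₂)) + (- 4 * (k : ℤ) ^ 2) * k * (k - 1)
        + 4 * k * (k - b₁) : ℤ) := by
    rw [e1, Finset.mul_sum, Finset.mul_sum]
    refine Finset.sum_congr rfl fun b₁ h1 => ?_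
    rw [Finset.mul_sum, Finset.mul_sum]
    refine Finset.sum_congr rfl fun b₂ h2 => ?_
    rw [← e3 b₁ h1 b₂ h2, Finset.mul_sum]
    congr 1
    exact Finset.sum_congr rfl fun b₃ h3 => e2 b₁ h1 b₂ h2 b₃ h3
  have e5 : ∀ b₁ : ℕ, ∑ b₂ ∈ Finset.range 2,
      (2 * k * (4 * k ^ 2 * (2 * k ^ 2 - 1 - b₁ - b₂ : ℤ)
        + 2 * k ^ 2 * (1 - k) * (2 * k - 1)
        - 2 * k ^ 2 * (k - 1) - 2 * k * (2 * k - 2 * b₁ - b₂)) + (- 4 * (k : ℤ) ^ 2) * k * (k - 1)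
        + 4 * k * (k - b₁) : ℤ) =
      (2 * k * (4 * k ^ 2 * (4 * k ^ 2 - 2 - 1)
        + 4 * k ^ 2 * (1 - k) * (2 * k - 1)
        - 4 * k ^ 2 * (k - 1) - 2 * k * (4 * k - 1)) + (- 8 * k ^ 2) * k * (k - 1)
        + 8 * k * k) + (-16 * k ^ 3 + 16 * k ^ 2 - 8 * k - 0 + (-8) * 0) * (b₁ : ℤ)
        + (0 : ℤ) := by
    intro b₁
    simp only [Finset.sum_range_succ, Finset.sum_range_zero]
    push_cast
    ring_nf
  simp_rw [e5, add_zero] at e4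
  have e6 := sum_lin k (2 * k * (4 * k ^ 2 * (4 * k ^ 2 - 2 - 1)
        + 4 * k ^ 2 * (1 - k) * (2 * k - 1)
        - 4 * k ^ 2 * (k - 1) - 2 * k * (4 * k - 1)) + (- 8 * k ^ 2) * k * (k - 1)
        + 8 * k * k) (-16 * k ^ 3 + 16 * k ^ 2 - 8 * k - 0 + (-8) * 0)
  rw [← e4] at e6
  linarith

lemma card_image (k : ℕ) :
    2 * (Set.ncard {v | ∃ b₁ b₂ b₃ m a f : ℕ, b₁ < k ∧ b₂ < 2 ∧ b₃ < k ∧ m < 2 * k ∧ a < k ∧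
      f < cntF k b₁ b₂ b₃ m a ∧ v = encF k b₁ b₂ b₃ m a f} : ℤ)
      = (2 * k ^ 2) * (2 * k ^ 2 - 1) ^ 2 := by
  rw [← card_Idx k]
  congr 2
  let g : ((_ : ℕ × ℕ × ℕ × ℕ × ℕ) × ℕ) → ℕ :=
    fun p => encF k p.1.1 p.1.2.1 p.1.2.2.1 p.1.2.2.2.1 p.1.2.2.2.2 p.2
  have hinj : Set.InjOn g (IdxF k : Set _) := by
    rintro ⟨⟨b₁, b₂, b₃, m, a⟩, f⟩ h ⟨⟨b₁', b₂', b₃', m', a'⟩, f'⟩ h' e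
    simp only [IdxF, Finset.mem_coe, Finset.mem_sigma, Finset.mem_product, Finset.mem_range] at h h'
    obtain ⟨rfl, rfl, rfl, rfl, rfl, rfl⟩ := enc_inj h.1.1 h.1.2.1 h.1.2.2.1 h.1.2.2.2.1
      h.1.2.2.2.2 h'.1.1 h'.1.2.1 h'.1.2.2.1 h'.1.2.2.2.1 h'.1.2.2.2.2 e
    rfl
  rw [← Finset.card_image_of_injOn hinj, ← Set.ncard_coe_finset]
  congr 1
  ext v
  simp only [Set.mem_ofPred_eq, Finset.coe_image, Set.mem_image, Finset.mem_coe]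
  constructor
  · rintro ⟨b₁, b₂, b₃, m, a, f, h1, h2, h3, h4, h5, h6, rfl⟩
    exact ⟨⟨⟨b₁, b₂, b₃, m, a⟩, f⟩, by
      simp only [IdxF, Finset.mem_sigma, Finset.mem_product, Finset.mem_range]
      exact ⟨⟨h1, h2, h3, h4, h5⟩, h6⟩, rfl⟩
  · rintro ⟨⟨⟨b₁, b₂, b₃, m, a⟩, f⟩, h, rfl⟩
    simp only [IdxF, Finset.mem_sigma, Finset.mem_product, Finset.mem_range] at h
    exact ⟨b₁, b₂, b₃, m, a, f, h.1.1, h.1.2.1, h.1.2.2.1, h.1.2.2.2.1, h.1.2.2.2.2, h.2, rfl⟩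

lemma lt_cnt {k b₁ b₂ b₃ m a f : ℕ} (hk : 1 ≤ k) :
    f < cntF k b₁ b₂ b₃ m a ↔
      b₁ + b₂ + b₃ + m * k + a + f + tF b₁ b₂ b₃ m + 2 ≤ 2 * k ^ 2 + m := by
  have : 1 ≤ 2 * k ^ 2 := by nlinarith
  unfold cntF
  omega

lemma mem_of (k v b₁ b₂ b₃ m a f : ℕ) (h1 : b₁ < k) (h2 : b₂ < 2) (h3 : b₃ < k)
    (h4 : m < 2 * k) (h5 : a < k)
    (h6 : b₁ + b₂ + b₃ + m * k + a + f + tF b₁ b₂ b₃ m + 2 ≤ 2 * k ^ 2 + m)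
    (h7 : v = encF k b₁ b₂ b₃ m a f) :
    ∃ b₁ b₂ b₃ m a f : ℕ, b₁ < k ∧ b₂ < 2 ∧ b₃ < k ∧ m < 2 * k ∧ a < k ∧
      f < cntF k b₁ b₂ b₃ m a ∧ v = encF k b₁ b₂ b₃ m a f :=
  ⟨b₁, b₂, b₃, m, a, f, h1, h2, h3, h4, h5, (lt_cnt (by omega)).2 h6, h7⟩

lemma t_zero {b₁ b₂ b₃ m : ℕ} (h : m < 2 * b₁ + b₂ + (if b₁ ≤ b₃ then 1 else 0)) :
    tF b₁ b₂ b₃ m = 0 := by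
  unfold tF thrF
  rw [if_neg (by omega)]

lemma t_le (b₁ b₂ b₃ m : ℕ) : tF b₁ b₂ b₃ m ≤ 1 := by
  unfold tF
  split_ifs <;> omega

lemma t_le' (b₁ b₂ b₃ m : ℕ) : tF b₁ b₂ b₃ m ≤ m := by
  unfold tF thrF
  split_ifs <;> omega

lemma divmod (k x : ℕ) (hk : 1 ≤ k) (h : x < 2 * k ^ 2) :
    ∃ m a, x = m * k + a ∧ a < k ∧ m < 2 * k := by
  refine ⟨x / k, x % k, ?_, Nat.mod_lt _ hk, ?_⟩
  · rw [mul_comm]; exact (Nat.div_add_mod x k).symm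
  · rw [Nat.div_lt_iff_lt_mul hk]; nlinarith

lemma F_sub (k : ℕ) (hk : 1 ≤ k) (v : ℕ)
    (hv : v ∈ F1 k (2 * k ^ 2) ∪ F2 k (2 * k ^ 2) ∪ F3 k (2 * k ^ 2) ∪ F4 k (2 * k ^ 2) ∪
      F5 k (2 * k ^ 2) ∪ F6 k (2 * k ^ 2)) :
    ∃ b₁ b₂ b₃ m a f : ℕ, b₁ < k ∧ b₂ < 2 ∧ b₃ < k ∧ m < 2 * k ∧ a < k ∧
      f < cntF k b₁ b₂ b₃ m a ∧ v = encF k b₁ b₂ b₃ m a f := by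
  rcases hv with ((((hv | hv) | hv) | hv) | hv) | hv
  · obtain ⟨a₁, a₂, a₃, a₄, f, h1, h2, h3, h4, rfl⟩ := hv
    obtain ⟨m, a, rfl, ha, hm⟩ := divmod k a₄ hk (by omega)
    have := t_le' a₁ a₂ a₃ m
    refine mem_of k _ a₁ a₂ a₃ m a f (by omega) (by omega) (by omega) hm ha (by omega) ?_
    unfold nuF encF; ring
  · obtain ⟨n, a₁, a₂, a₃, a₄, f, h0, h0', h1, h2, h3, h4, h5, rfl⟩ := hv
    obtain ⟨m, a, hx, ha, hm⟩ := divmod k (a₄ + (n + 1) * k) hk (by nlinarith)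
    have := t_le a₁ a₂ a₃ m
    have hnm : n + 1 ≤ m := by
      by_contra hc
      have : m * k + k ≤ (n + 1) * k := by nlinarith
      omega
    refine mem_of k _ a₁ a₂ a₃ m a f (by omega) (by omega) (by omega) hm ha ?_ ?_
    · have : (n + 1) * k = n * k + k := by ring
      omega
    · unfold nuF encF
      have : a = a₄ + (n + 1) * k - m * k := by omega
      zify at hx ⊢
      linear_combination (2 * (k : ℤ) ^ 2) * hx
  · obtain ⟨n, a₁, a₂, a₃, a₄, f, h0, h1, h2, h3, h4, h5, rfl⟩ := hv
    have ht := @t_zero (a₁ + n + 1) a₂ a₃ (2 * n + 1) (by omega)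
    refine mem_of k _ (a₁ + n + 1) a₂ a₃ (2 * n + 1) a₄ f (by omega) (by omega) (by omega)
      (by omega) (by omega) ?_ ?_
    · rw [ht]; nlinarith
    · unfold nuF encF; ring
  · obtain ⟨n, a₁, a₂, a₃, a₄, f, h0, h1, h2, h3, h4, h5, rfl⟩ := hv
    have ht := @t_zero (a₁ + n + 2) a₂ a₃ (2 * n + 2) (by omega)
    refine mem_of k _ (a₁ + n + 2) a₂ a₃ (2 * n + 2) a₄ f (by omega) (by omega) (by omega)
      (by omega) (by omega) ?_ ?_
    · rw [ht]; nlinarith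
    · unfold nuF encF; ring
  · obtain ⟨c, d, a₁, a₂, a₃, a₄, f, rfl, h0, h1, h2, h3, h4, h5, h6, rfl⟩ := hv
    have ht := @t_zero d (a₂ + c) (a₃ + d) (2 * d + c) (by rw [if_pos (by omega)]; omega)
    refine mem_of k _ d (a₂ + c) (a₃ + d) (2 * d + c) a₄ f (by omega) (by omega) (by omega)
      (by omega) (by omega) ?_ ?_
    · rw [ht]; nlinarith
    · unfold nuF encF; ring
  · obtain ⟨n, a₁, a₂, a₃, a₄, f, rfl, rfl, h0, h1, h2, h3, rfl⟩ := hv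
    have ht := @t_zero (n + 1) 1 a₃ (2 * n + 2) (by omega)
    refine mem_of k _ (n + 1) 1 a₃ (2 * n + 2) a₄ f (by omega) (by omega) (by omega)
      (by omega) (by omega) ?_ ?_
    · rw [ht]; nlinarith
    · unfold nuF encF; ring

lemma sub_F (k : ℕ) (hk : 1 ≤ k) (v b₁ b₂ b₃ m a f : ℕ) (h1 : b₁ < k) (h2 : b₂ < 2)
    (h3 : b₃ < k) (h4 : m < 2 * k) (h5 : a < k)
    (h6 : f < cntF k b₁ b₂ b₃ m a) (hv : v = encF k b₁ b₂ b₃ m a f) :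
    v ∈ F1 k (2 * k ^ 2) ∪ F2 k (2 * k ^ 2) ∪ F3 k (2 * k ^ 2) ∪ F4 k (2 * k ^ 2) ∪
      F5 k (2 * k ^ 2) ∪ F6 k (2 * k ^ 2) := by
  rw [lt_cnt hk] at h6
  have hA : m * k + k ≤ 2 * k ^ 2 := by nlinarith
  by_cases c1 : b₁ + b₂ + b₃ + (m * k + a) + f + 2 ≤ 2 * k ^ 2
  · refine Or.inl (Or.inl (Or.inl (Or.inl (Or.inl
      ⟨b₁, b₂, b₃, m * k + a, f, by omega, by omega, by omega, c1, ?_⟩))))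
    rw [hv]; unfold nuF encF; ring
  obtain ⟨n, hn⟩ : ∃ n, b₁ + b₂ + b₃ + (m * k + a) + f + 2 = 2 * k ^ 2 + n :=
    Nat.exists_eq_add_of_le (by omega)
  by_cases c2 : n < m
  · obtain ⟨j, rfl⟩ : ∃ j, m = n + 1 + j := Nat.exists_eq_add_of_le (by omega)
    refine Or.inl (Or.inl (Or.inl (Or.inl (Or.inr
      ⟨n, b₁, b₂, b₃, j * k + a, f, by omega, by omega, by omega, by omega, by omega,
        ?_, ?_, ?_⟩))))
    · nlinarith
    · nlinarith
    · rw [hv]; unfold nuF encF; ring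
  have hnm : n = m := by omega
  subst hnm
  have ht : tF b₁ b₂ b₃ n = 0 := by omega
  have hC : n < 2 * b₁ + b₂ + (if b₁ ≤ b₃ then 1 else 0) := by
    unfold tF thrF at ht
    by_contra hc
    rw [if_pos (by omega)] at ht
    omega
  by_cases c3 : n < 2 * b₁
  · rcases Nat.even_or_odd' n with ⟨j, rfl | rfl⟩
    · obtain ⟨i, rfl⟩ : ∃ i, j = i + 1 := ⟨j - 1, by omega⟩
      obtain ⟨a₁, rfl⟩ : ∃ a₁, b₁ = i + 2 + a₁ := Nat.exists_eq_add_of_le (by omega)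
      refine Or.inl (Or.inl (Or.inr
        ⟨i, a₁, b₂, b₃, a, f, by omega, by omega, by omega, by omega, by omega, ?_, ?_⟩))
      · zify at hn ⊢; linear_combination hn
      · rw [hv]; unfold nuF encF; ring
    · obtain ⟨a₁, rfl⟩ : ∃ a₁, b₁ = j + 1 + a₁ := Nat.exists_eq_add_of_le (by omega)
      refine Or.inl (Or.inl (Or.inl (Or.inr
        ⟨j, a₁, b₂, b₃, a, f, by omega, by omega, by omega, by omega, by omega, ?_, ?_⟩)))
      · zify at hn ⊢; linear_combination hn
      · rw [hv]; unfold nuF encF; ring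
  by_cases c4 : b₁ ≤ b₃
  · rw [if_pos c4] at hC
    obtain ⟨a₃, rfl⟩ := Nat.exists_eq_add_of_le c4
    obtain ⟨c, rfl⟩ : ∃ c, n = 2 * b₁ + c := Nat.exists_eq_add_of_le (by omega)
    obtain ⟨a₂, rfl⟩ : ∃ a₂, b₂ = c + a₂ := Nat.exists_eq_add_of_le (by omega)
    refine Or.inl (Or.inr ⟨c, b₁, 0, a₂, a₃, a, f, rfl, by omega, by omega, by omega, by omega,
      by omega, by omega, ?_, ?_⟩)
    · zify at hn ⊢; linear_combination hn
    · rw [hv]; unfold nuF encF; ring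
  · rw [if_neg c4] at hC
    obtain rfl : b₂ = 1 := by omega
    obtain rfl : n = 2 * b₁ := by omega
    obtain ⟨i, rfl⟩ : ∃ i, b₁ = i + 1 := ⟨b₁ - 1, by omega⟩
    refine Or.inr ⟨i, 0, 0, b₃, a, f, rfl, rfl, by omega, by omega, by omega, ?_, ?_⟩
    · zify at hn ⊢; linear_combination hn
    · rw [hv]; unfold nuF encF; ring

/-- The union `F = F₁ ∪ F₂ ∪ F₃ ∪ F₄ ∪ F₅ ∪ F₆` has exactly `q(q−1)²/2` elements. -/
theorem stmt_13 (s : ℕ) (hs : 1 ≤ s) (q₀ q : ℕ)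
    (hq₀ : q₀ = 2 ^ s) (hq : q = 2 * q₀ ^ 2) :
    (F1 q₀ q ∪ F2 q₀ q ∪ F3 q₀ q ∪ F4 q₀ q ∪ F5 q₀ q ∪ F6 q₀ q).ncard =
      q * (q - 1) ^ 2 / 2 := by
  have hk : 1 ≤ q₀ := by rw [hq₀]; exact Nat.one_le_two_pow
  subst hq
  have hset : F1 q₀ (2 * q₀ ^ 2) ∪ F2 q₀ (2 * q₀ ^ 2) ∪ F3 q₀ (2 * q₀ ^ 2) ∪
      F4 q₀ (2 * q₀ ^ 2) ∪ F5 q₀ (2 * q₀ ^ 2) ∪ F6 q₀ (2 * q₀ ^ 2) =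
      {v | ∃ b₁ b₂ b₃ m a f : ℕ, b₁ < q₀ ∧ b₂ < 2 ∧ b₃ < q₀ ∧ m < 2 * q₀ ∧ a < q₀ ∧
      f < cntF q₀ b₁ b₂ b₃ m a ∧ v = encF q₀ b₁ b₂ b₃ m a f} := by
    ext v
    constructor
    · exact F_sub q₀ hk v
    · rintro ⟨b₁, b₂, b₃, m, a, f, h1, h2, h3, h4, h5, h6, h7⟩
      exact sub_F q₀ hk v b₁ b₂ b₃ m a f h1 h2 h3 h4 h5 h6 h7
  rw [hset]
  have h := card_image q₀
  generalize Set.ncard _ = N at h ⊢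
  have h1 : 1 ≤ 2 * q₀ ^ 2 := by nlinarith
  symm
  apply Nat.div_eq_of_eq_mul_right (by norm_num)
  zify
  rw [h]
  push_cast [Nat.cast_sub h1]
  ring
end

section
/- Let s ≥ 1 be an integer, q₀ = 2^s and q = 2q₀². For nonnegative integers a₁,a₂,a₃,a₄,f write σ = a₁+a₂+a₃+a₄+f and ν = a₁ + a₂q₀ + 2a₃q₀ + a₄q + fq². Define the sets F₁,…,F₆ of natural numbers: F₁ = {ν+1 : 0≤a₁≤q₀−1, 0≤a₂≤1, 0≤a₃≤q₀−1, a₄≥0, f≥0, σ≤q−2}; F₂ = {ν+(n+1)q₀q+1 : 1≤n≤2q₀−2, 0≤a₁≤q₀−1, 0≤a₂≤1, 0≤a₃≤q₀−1, 0≤a₄≤q−q₀−1−nq₀, f≥0, σ=q−q₀−2−nq₀+n}; F₃ = {ν+(2n+1)q₀q+n+2 : 0≤n≤q₀−2, 0≤a₁≤q₀−2−n, 0≤a₂≤1, 0≤a₃≤q₀−1, 0≤a₄≤q₀−1, f≥0, σ=q−q₀−2−2nq₀+n}; F₄ = {ν+(2n+2)q₀q+n+3 : 0≤n≤q₀−3,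 0≤a₁≤q₀−3−n, 0≤a₂≤1, 0≤a₃≤q₀−1, 0≤a₄≤q₀−1, f≥0, σ=q−2q₀−2−2nq₀+n}; F₅ = {ν+cq₀(q+1)+d(2qq₀+2q₀+1)+1 : a₁=0, 0≤c≤1, 0≤a₂≤1−c, 1−c≤d≤q₀−1, 0≤a₃≤q₀−1−d, 0≤a₄≤q₀−1, f≥0, σ=q−2−2dq₀−cq₀}; F₆ = {ν+q₀+(2n+2)q₀q+n+2 : a₁=0, a₂=0, 0≤n≤q₀−2, 0≤a₃≤n, 0≤a₄≤q₀−1, f≥0, σ=q−2q₀−2−2nq₀+n}. Then the six sets F₁, F₂, F₃, F₄, F₅, F₆ are pairwise disjoint. -/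
def Dig (Q q A B C M f v : ℕ) : Prop :=
  A < Q ∧ B ≤ 1 ∧ C < Q ∧ M < q ∧ v = A + B * Q + 2 * C * Q + M * q + f * q ^ 2 + 1

theorem dm {b x y u w : ℕ} (hx : x < b) (hu : u < b) (h : x + b * y = u + b * w) :
    x = u ∧ y = w := by
  have h1 : x = u := by
    have := congrArg (· % b) h
    simpa [Nat.add_mul_mod_self_left, Nat.mod_eq_of_lt hx, Nat.mod_eq_of_lt hu] using this
  refine ⟨h1, ?_⟩
  subst h1
  exact Nat.eq_of_mul_eq_mul_left (by omega) (Nat.add_left_cancel h)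

theorem Dig.uniq {Q q A B C M f A' B' C' M' f' v : ℕ} (hq : q = 2 * Q ^ 2)
    (h : Dig Q q A B C M f v) (h' : Dig Q q A' B' C' M' f' v) :
    A = A' ∧ B = B' ∧ C = C' ∧ M = M' ∧ f = f' := by
  obtain ⟨hA, hB, hC, hM, hv⟩ := h
  obtain ⟨hA', hB', hC', hM', hv'⟩ := h'
  subst hq
  have e : A + Q * (B + 2 * (C + Q * (M + (2 * Q ^ 2) * f)))
      = A' + Q * (B' + 2 * (C' + Q * (M' + (2 * Q ^ 2) * f'))) := by
    have := hv.symm.trans hv'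
    nlinarith [this]
  obtain ⟨e1, e⟩ := dm hA hA' e
  obtain ⟨e2, e⟩ := dm (by omega) (by omega) e
  obtain ⟨e3, e⟩ := dm hC hC' e
  obtain ⟨e4, e⟩ := dm hM hM' e
  exact ⟨e1, e2, e3, e4, e⟩

theorem m1 {Q q v : ℕ} (h : v ∈ F1 Q q) :
    ∃ A B C M f, Dig Q q A B C M f v ∧ A + B + C + M + f + 2 ≤ q := by
  obtain ⟨a, b, c, d, f, h1, h2, h3, h4, h5⟩ := h
  exact ⟨a, b, c, d, f, ⟨by omega, h2, by omega, by omega, by rw [h5, nuF]⟩, h4⟩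

theorem m2 {Q q v : ℕ} (h : v ∈ F2 Q q) :
    ∃ k A B C M f, Dig Q q A B C M f v ∧ A + B + C + M + f + 2 = q + k ∧ 1 ≤ k ∧
      (k + 1) * Q ≤ M := by
  obtain ⟨n, a, b, c, d, f, h0, h0', h1, h2, h3, h4, h4', h5⟩ := h
  refine ⟨n, a, b, c, d + (n + 1) * Q, f, ⟨by omega, h2, by omega, by nlinarith, ?_⟩, ?_, h0, ?_⟩
  · rw [h5, nuF]; ring
  · nlinarith
  · omega

theorem m3 {Q q v : ℕ} (hq : q = 2 * Q ^ 2) (h : v ∈ F3 Q q) :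
    ∃ k n A B C M f, Dig Q q A B C M f v ∧ A + B + C + M + f + 2 = q + k ∧ k = 2 * n + 1 ∧
      M < (k + 1) * Q ∧ n + 1 ≤ A := by
  obtain ⟨n, a, b, c, d, f, h0, h1, h2, h3, h4, h4', h5⟩ := h
  refine ⟨2 * n + 1, n, a + n + 1, b, c, d + (2 * n + 1) * Q, f,
    ⟨by omega, h2, by omega, by nlinarith, ?_⟩, ?_, rfl, ?_, by omega⟩
  · rw [h5, nuF]; ring
  · nlinarith
  · nlinarith

theorem m4 {Q q v : ℕ} (hq : q = 2 * Q ^ 2) (h : v ∈ F4 Q q) :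
    ∃ k n A B C M f, Dig Q q A B C M f v ∧ A + B + C + M + f + 2 = q + k ∧ k = 2 * n + 2 ∧
      M < (k + 1) * Q ∧ n + 2 ≤ A := by
  obtain ⟨n, a, b, c, d, f, h0, h1, h2, h3, h4, h4', h5⟩ := h
  refine ⟨2 * n + 2, n, a + n + 2, b, c, d + (2 * n + 2) * Q, f,
    ⟨by omega, h2, by omega, by nlinarith, ?_⟩, ?_, rfl, ?_, by omega⟩
  · rw [h5, nuF]; ring
  · nlinarith
  · nlinarith

theorem m5 {Q q v : ℕ} (hq : q = 2 * Q ^ 2) (h : v ∈ F5 Q q) :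
    ∃ k c A B C M f, Dig Q q A B C M f v ∧ A + B + C + M + f + 2 = q + k ∧ k = 2 * A + c ∧
      c ≤ 1 ∧ 1 ≤ k ∧ M < (k + 1) * Q ∧ A ≤ C := by
  obtain ⟨e, n, a, b, c, d, f, ha, he, h0, h1, h2, h3, h4, h4', h5⟩ := h
  subst ha
  have h6 : d + (2 * n + e) * Q < (2 * n + e + 1) * Q := by nlinarith
  have h7 : (2 * n + e + 1) * Q ≤ (2 * Q) * Q := Nat.mul_le_mul_right _ (by omega)
  refine ⟨2 * n + e, e, n, b + e, c + n, d + (2 * n + e) * Q, f,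
    ⟨by omega, h0, by omega, by nlinarith, ?_⟩, ?_, rfl, he, by omega, h6, by omega⟩
  · rw [h5, nuF]; ring
  · nlinarith

theorem m6 {Q q v : ℕ} (hq : q = 2 * Q ^ 2) (h : v ∈ F6 Q q) :
    ∃ k n A B C M f, Dig Q q A B C M f v ∧ A + B + C + M + f + 2 = q + k ∧ k = 2 * n + 2 ∧
      M < (k + 1) * Q ∧ A = n + 1 ∧ C ≤ n := by
  obtain ⟨n, a, b, c, d, f, ha, hb, h0, h3, h4, h4', h5⟩ := h
  subst ha hb
  refine ⟨2 * n + 2, n, n + 1, 1, c, d + (2 * n + 2) * Q, f,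
    ⟨by omega, le_rfl, by omega, by nlinarith, ?_⟩, ?_, rfl, ?_, rfl, h3⟩
  · rw [h5, nuF]; ring
  · nlinarith
  · nlinarith

theorem dj {S T : Set ℕ} (h : ∀ v, v ∈ S → v ∈ T → False) : Disjoint S T :=
  Set.disjoint_left.2 fun v a b => h v a b

/-- The six sets `F₁, F₂, F₃, F₄, F₅, F₆` are pairwise disjoint. -/
theorem stmt_14 (s : ℕ) (hs : 1 ≤ s) (q₀ q : ℕ)
    (hq₀ : q₀ = 2 ^ s) (hq : q = 2 * q₀ ^ 2) :
    ([F1 q₀ q, F2 q₀ q, F3 q₀ q, F4 q₀ q, F5 q₀ q, F6 q₀ q] : List (Set ℕ)).Pairwise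
      Disjoint := by
  simp only [List.pairwise_cons, List.mem_cons, List.not_mem_nil, or_false, forall_eq_or_imp,
    forall_eq, List.Pairwise.nil, and_true, false_imp_iff, implies_true]
  refine ⟨⟨?_, ?_, ?_, ?_, ?_⟩, ⟨?_, ?_, ?_, ?_⟩, ⟨?_, ?_, ?_⟩, ⟨?_, ?_⟩, ?_⟩ <;>
    refine dj fun v h h' => ?_
  · obtain ⟨A, B, C, M, f, hD, hS⟩ := m1 h
    obtain ⟨k', A', B', C', M', f', hD', hS', hk', hM'⟩ := m2 h'
    obtain ⟨rfl, rfl, rfl, rfl, rfl⟩ := hD.uniq hq hD'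
    omega
  · obtain ⟨A, B, C, M, f, hD, hS⟩ := m1 h
    obtain ⟨k', n', A', B', C', M', f', hD', hS', hk', hM', hA'⟩ := m3 hq h'
    obtain ⟨rfl, rfl, rfl, rfl, rfl⟩ := hD.uniq hq hD'
    omega
  · obtain ⟨A, B, C, M, f, hD, hS⟩ := m1 h
    obtain ⟨k', n', A', B', C', M', f', hD', hS', hk', hM', hA'⟩ := m4 hq h'
    obtain ⟨rfl, rfl, rfl, rfl, rfl⟩ := hD.uniq hq hD'
    omega
  · obtain ⟨A, B, C, M, f, hD, hS⟩ := m1 h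
    obtain ⟨k', n', A', B', C', M', f', hD', hS', hk', hc', hk1', hM', hA'⟩ := m5 hq h'
    obtain ⟨rfl, rfl, rfl, rfl, rfl⟩ := hD.uniq hq hD'
    omega
  · obtain ⟨A, B, C, M, f, hD, hS⟩ := m1 h
    obtain ⟨k', n', A', B', C', M', f', hD', hS', hk', hM', hA', hC'⟩ := m6 hq h'
    obtain ⟨rfl, rfl, rfl, rfl, rfl⟩ := hD.uniq hq hD'
    omega
  · obtain ⟨k, A, B, C, M, f, hD, hS, hk, hM⟩ := m2 h
    obtain ⟨k', n', A', B', C', M', f', hD', hS', hk', hM', hA'⟩ := m3 hq h'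
    obtain ⟨rfl, rfl, rfl, rfl, rfl⟩ := hD.uniq hq hD'
    obtain rfl : k = k' := by omega
    omega
  · obtain ⟨k, A, B, C, M, f, hD, hS, hk, hM⟩ := m2 h
    obtain ⟨k', n', A', B', C', M', f', hD', hS', hk', hM', hA'⟩ := m4 hq h'
    obtain ⟨rfl, rfl, rfl, rfl, rfl⟩ := hD.uniq hq hD'
    obtain rfl : k = k' := by omega
    omega
  · obtain ⟨k, A, B, C, M, f, hD, hS, hk, hM⟩ := m2 h
    obtain ⟨k', n', A', B', C', M', f', hD', hS', hk', hc', hk1', hM', hA'⟩ := m5 hq h'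
    obtain ⟨rfl, rfl, rfl, rfl, rfl⟩ := hD.uniq hq hD'
    obtain rfl : k = k' := by omega
    omega
  · obtain ⟨k, A, B, C, M, f, hD, hS, hk, hM⟩ := m2 h
    obtain ⟨k', n', A', B', C', M', f', hD', hS', hk', hM', hA', hC'⟩ := m6 hq h'
    obtain ⟨rfl, rfl, rfl, rfl, rfl⟩ := hD.uniq hq hD'
    obtain rfl : k = k' := by omega
    omega
  · obtain ⟨k, n, A, B, C, M, f, hD, hS, hk, hM, hA⟩ := m3 hq h
    obtain ⟨k', n', A', B', C', M', f', hD', hS', hk', hM', hA'⟩ := m4 hq h'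
    obtain ⟨rfl, rfl, rfl, rfl, rfl⟩ := hD.uniq hq hD'
    omega
  · obtain ⟨k, n, A, B, C, M, f, hD, hS, hk, hM, hA⟩ := m3 hq h
    obtain ⟨k', n', A', B', C', M', f', hD', hS', hk', hc', hk1', hM', hA'⟩ := m5 hq h'
    obtain ⟨rfl, rfl, rfl, rfl, rfl⟩ := hD.uniq hq hD'
    omega
  · obtain ⟨k, n, A, B, C, M, f, hD, hS, hk, hM, hA⟩ := m3 hq h
    obtain ⟨k', n', A', B', C', M', f', hD', hS', hk', hM', hA', hC'⟩ := m6 hq h'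
    obtain ⟨rfl, rfl, rfl, rfl, rfl⟩ := hD.uniq hq hD'
    omega
  · obtain ⟨k, n, A, B, C, M, f, hD, hS, hk, hM, hA⟩ := m4 hq h
    obtain ⟨k', n', A', B', C', M', f', hD', hS', hk', hc', hk1', hM', hA'⟩ := m5 hq h'
    obtain ⟨rfl, rfl, rfl, rfl, rfl⟩ := hD.uniq hq hD'
    omega
  · obtain ⟨k, n, A, B, C, M, f, hD, hS, hk, hM, hA⟩ := m4 hq h
    obtain ⟨k', n', A', B', C', M', f', hD', hS', hk', hM', hA', hC'⟩ := m6 hq h'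
    obtain ⟨rfl, rfl, rfl, rfl, rfl⟩ := hD.uniq hq hD'
    omega
  · obtain ⟨k, n, A, B, C, M, f, hD, hS, hk, hc, hk1, hM, hA⟩ := m5 hq h
    obtain ⟨k', n', A', B', C', M', f', hD', hS', hk', hM', hA', hC'⟩ := m6 hq h'
    obtain ⟨rfl, rfl, rfl, rfl, rfl⟩ := hD.uniq hq hD'
    omega
end

section
/- Let s ≥ 3 be an integer, q₀ = 2^s and q = 2q₀². For nonnegative integers a₁,a₂,a₃,a₄,f write σ = a₁+a₂+a₃+a₄+f and ν = a₁ + a₂q₀ + 2a₃q₀ + a₄q + fq², and let F₁ = {ν+1 : 0≤a₁≤q₀−1, 0≤a₂≤1, 0≤a₃≤q₀−1, a₄≥0, f≥0, σ≤q−2}. Then the cardinality of F₁ satisfies 24·|F₁| = 12q³ − 24q₀q² + 7q² − 2q, i.e. |F₁| = q³/2 − q₀q² + 7q²/24 − q/12. -/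
theorem digit_aux {m a b c d : ℕ} (ha : a < m) (hb : b < m) (h : a + m * c = b + m * d) :
    a = b ∧ c = d := by
  have h1 : a = b := by
    have := congrArg (· % m) h
    simpa [Nat.add_mul_mod_self_left, Nat.mod_eq_of_lt ha, Nat.mod_eq_of_lt hb] using this
  subst h1
  refine ⟨rfl, ?_⟩
  exact Nat.eq_of_mul_eq_mul_left (by omega) (Nat.add_left_cancel h)

def idxF (q₀ q : ℕ) : Finset (Σ _ : ℕ × ℕ × ℕ, Σ _ : ℕ, ℕ) :=
  (Finset.range q₀ ×ˢ Finset.range 2 ×ˢ Finset.range q₀).sigma (fun t =>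
    (Finset.range (q - 1 - (t.1 + t.2.1 + t.2.2))).sigma (fun a =>
      Finset.range (q - 1 - (t.1 + t.2.1 + t.2.2) - a)))

def valF (q₀ q : ℕ) (x : Σ _ : ℕ × ℕ × ℕ, Σ _ : ℕ, ℕ) : ℕ :=
  nuF q₀ q x.1.1 x.1.2.1 x.1.2.2 x.2.1 x.2.2 + 1

theorem F1_eq (q₀ q : ℕ) : F1 q₀ q = ((idxF q₀ q).image (valF q₀ q) : Finset ℕ) := by
  ext v
  simp only [F1, Set.mem_setOf_eq, Finset.coe_image, Set.mem_image, Finset.mem_coe]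
  constructor
  · rintro ⟨a, b, c, d, f, h1, h2, h3, h4, rfl⟩
    refine ⟨⟨(a, b, c), ⟨d, f⟩⟩, ?_, rfl⟩
    simp only [idxF, Finset.mem_sigma, Finset.mem_product, Finset.mem_range]
    omega
  · rintro ⟨⟨⟨a, b, c⟩, ⟨d, f⟩⟩, h, rfl⟩
    simp only [idxF, Finset.mem_sigma, Finset.mem_product, Finset.mem_range] at h
    exact ⟨a, b, c, d, f, by omega, by omega, by omega, by omega, rfl⟩

theorem valF_inj (q₀ q : ℕ) (hq : q = 2 * q₀ ^ 2) :
    Set.InjOn (valF q₀ q) (idxF q₀ q) := by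
  rintro ⟨⟨a, b, c⟩, ⟨d, f⟩⟩ h ⟨⟨a', b', c'⟩, ⟨d', f'⟩⟩ h' e
  simp only [idxF, Finset.coe_sort_coe, Finset.mem_coe, Finset.mem_sigma, Finset.mem_product,
    Finset.mem_range] at h h'
  simp only [valF, nuF, add_left_inj] at e
  have e1 : a + q₀ * (b + 2 * (c + q₀ * (d + q * f)))
      = a' + q₀ * (b' + 2 * (c' + q₀ * (d' + q * f'))) := by
    have key : ∀ a b c d f : ℕ, a + q₀ * (b + 2 * (c + q₀ * (d + q * f)))
      = a + b * q₀ + 2 * c * q₀ + d * q + f * q ^ 2 := by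
      intros
      rw [hq]; ring
    rw [key, key, e]
  obtain ⟨rfl, e2⟩ := digit_aux h.1.1 h'.1.1 e1
  obtain ⟨rfl, e3⟩ := digit_aux h.1.2.1 h'.1.2.1 e2
  obtain ⟨rfl, e4⟩ := digit_aux h.1.2.2 h'.1.2.2 e3
  obtain ⟨rfl, rfl⟩ := digit_aux (by omega) (by omega) e4
  rfl

theorem tri_sum (n : ℕ) : 2 * ∑ a ∈ Finset.range n, (n - a) = n * (n + 1) := by
  induction n with
  | zero => simp
  | succ n ih =>
    rw [Finset.sum_range_succ']
    simp only [Nat.add_sub_add_right, Nat.sub_zero, mul_add, ih]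
    ring

theorem sum_two (x : ℤ) (n : ℕ) : 3 * ∑ i ∈ Finset.range n, (x - i) * (x - i - 1)
    = (x + 1) * x * (x - 1) - (x - n + 1) * (x - n) * (x - n - 1) := by
  induction n with
  | zero => simp
  | succ n ih =>
    rw [Finset.sum_range_succ, mul_add, ih]
    push_cast
    ring

theorem sum_three (x : ℤ) (n : ℕ) : 4 * ∑ i ∈ Finset.range n, (x - i + 1) * (x - i) * (x - i - 1)
    = (x + 2) * (x + 1) * x * (x - 1) - (x - n + 2) * (x - n + 1) * (x - n) * (x - n - 1) := by
  induction n with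
  | zero => simp
  | succ n ih =>
    rw [Finset.sum_range_succ, mul_add, ih]
    push_cast
    ring

theorem sum_dbl (x : ℤ) (n : ℕ) :
    12 * ∑ i ∈ Finset.range n, ∑ j ∈ Finset.range n, (x - i - j) * (x - i - j - 1)
    = (x + 2) * (x + 1) * x * (x - 1) - 2 * ((x - n + 2) * (x - n + 1) * (x - n) * (x - n - 1))
      + (x - n - n + 2) * (x - n - n + 1) * (x - n - n) * (x - n - n - 1) := by
  have h : 3 * ∑ i ∈ Finset.range n, ∑ j ∈ Finset.range n, (x - i - j) * (x - i - j - 1)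
      = ∑ i ∈ Finset.range n, (x - i + 1) * (x - i) * (x - i - 1)
       - ∑ i ∈ Finset.range n, (x - n - i + 1) * (x - n - i) * (x - n - i - 1) := by
    rw [Finset.mul_sum, ← Finset.sum_sub_distrib]
    refine Finset.sum_congr rfl fun i _ => ?_
    rw [sum_two]; ring
  linarith [sum_three x n, sum_three (x - n) n]

theorem card_idx (q₀ q : ℕ) (h8 : 2 * q₀ ≤ q) :
    2 * ((idxF q₀ q).card : ℤ) = ∑ i ∈ Finset.range q₀, ∑ b ∈ Finset.range 2,
      ∑ j ∈ Finset.range q₀, ((q : ℤ) - b - i - j) * ((q : ℤ) - b - i - j - 1) := by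
  have h : 2 * (idxF q₀ q).card = ∑ i ∈ Finset.range q₀, ∑ b ∈ Finset.range 2,
      ∑ j ∈ Finset.range q₀, (q - 1 - (i + b + j)) * (q - 1 - (i + b + j) + 1) := by
    simp only [idxF, Finset.card_sigma, Finset.card_range, Finset.mul_sum, Finset.sum_product]
    simp only [← Finset.mul_sum, tri_sum]
  have h2 := congrArg (Nat.cast : ℕ → ℤ) h
  push_cast at h2
  rw [h2]
  refine Finset.sum_congr rfl fun i hi => Finset.sum_congr rfl fun b hb =>
    Finset.sum_congr rfl fun j hj => ?_
  rw [Finset.mem_range] at hi hb hj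
  have : ((q - 1 - (i + b + j) : ℕ) : ℤ) = (q : ℤ) - b - i - j - 1 := by omega
  rw [this]; ring

/-- For `s ≥ 3`, the cardinality of `F₁` satisfies
`24·|F₁| = 12q³ − 24q₀q² + 7q² − 2q`, i.e. `|F₁| = q³/2 − q₀q² + 7q²/24 − q/12`. -/
theorem stmt_16 (s : ℕ) (hs : 3 ≤ s) (q₀ q : ℕ)
    (hq₀ : q₀ = 2 ^ s) (hq : q = 2 * q₀ ^ 2) :
    24 * (F1 q₀ q).ncard = 12 * q ^ 3 - 24 * q₀ * q ^ 2 + 7 * q ^ 2 - 2 * q := by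
  have h8 : 8 ≤ q₀ := by
    rw [hq₀]
    calc 8 = 2 ^ 3 := by norm_num
      _ ≤ 2 ^ s := Nat.pow_le_pow_right (by norm_num) hs
  clear hq₀ hs
  have hle : 2 * q₀ ≤ q := by rw [hq]; nlinarith
  rw [F1_eq, Set.ncard_coe_finset, Finset.card_image_of_injOn (valF_inj q₀ q hq)]
  have hc := card_idx q₀ q hle
  rw [Finset.sum_comm, Finset.sum_range_succ, Finset.sum_range_one] at hc
  have d0 := sum_dbl ((q : ℤ) - (0 : ℕ)) q₀
  have d1 := sum_dbl ((q : ℤ) - (1 : ℕ)) q₀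
  have hqz : (q : ℤ) = 2 * (q₀ : ℤ) ^ 2 := by exact_mod_cast hq
  have s1 : 24 * q₀ * q ^ 2 ≤ 12 * q ^ 3 := by
    calc 24 * q₀ * q ^ 2 = 12 * (2 * q₀) * q ^ 2 := by ring
      _ ≤ 12 * q * q ^ 2 := by gcongr
      _ = 12 * q ^ 3 := by ring
  have s2 : 2 * q ≤ 7 * q ^ 2 := by nlinarith
  have main : 24 * ((idxF q₀ q).card : ℤ) + 2 * q + 24 * q₀ * q ^ 2 = 12 * q ^ 3 + 7 * q ^ 2 := by
    have : 24 * ((idxF q₀ q).card : ℤ) = 12 * (2 * ((idxF q₀ q).card : ℤ)) := by ring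
    rw [this, hc, mul_add, d0, d1, hqz]
    push_cast
    ring
  have main' : 24 * (idxF q₀ q).card + 2 * q + 24 * q₀ * q ^ 2 = 12 * q ^ 3 + 7 * q ^ 2 := by
    exact_mod_cast main
  omega
end

section
/- Let s ≥ 3 be an integer, q₀ = 2^s and q = 2q₀². For nonnegative integers a₁,a₂,a₃,a₄,f write σ = a₁+a₂+a₃+a₄+f and ν = a₁ + a₂q₀ + 2a₃q₀ + a₄q + fq², and let F₂ = {ν+(n+1)q₀q+1 : 1≤n≤2q₀−2, 0≤a₁≤q₀−1, 0≤a₂≤1, 0≤a₃≤q₀−1, 0≤a₄≤q−q₀−1−nq₀, f≥0, σ=q−q₀−2−nq₀+n}. Then the cardinality of F₂ satisfies 24·|F₂| = 24q₀q² − 43q² + 24q₀q + 2q + 24, i.e. |F₂| = q₀q² − 43q²/24 + q₀q + q/12 + 1. -/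
lemma digit_uniq {d x y x' y' : ℕ} (hx : x < d) (hx' : x' < d)
    (h : x + d * y = x' + d * y') : x = x' ∧ y = y' := by
  have h1 : x = x' := by
    have := congrArg (· % d) h
    simpa [Nat.add_mul_mod_self_left, Nat.mod_eq_of_lt hx, Nat.mod_eq_of_lt hx'] using this
  subst h1
  have h2 : d * y = d * y' := by omega
  exact ⟨rfl, Nat.eq_of_mul_eq_mul_left (by omega) h2⟩

/-- index set -/
def idx (q₀ : ℕ) : Finset (Σ _ : ℕ × ℕ × ℕ × ℕ, ℕ) :=
  (Finset.range q₀ ×ˢ Finset.range 2 ×ˢ Finset.range q₀ ×ˢ Finset.range (2 * q₀ - 2)).sigma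
    (fun p => Finset.range (q₀ * (2 * q₀ - 2 - p.2.2.2) - (p.1 + p.2.1 + p.2.2.1 - p.2.2.2)))

/-- parametrization -/
def par (q₀ q : ℕ) (x : Σ _ : ℕ × ℕ × ℕ × ℕ, ℕ) : ℕ :=
  nuF q₀ q x.1.1 x.1.2.1 x.1.2.2.1 x.2
    (q + (x.1.2.2.2 + 1) - q₀ - 2 - (x.1.2.2.2 + 1) * q₀ - (x.1.1 + x.1.2.1 + x.1.2.2.1) - x.2)
    + (x.1.2.2.2 + 1 + 1) * q₀ * q + 1

lemma mem_idx (q₀ a b c k d : ℕ) : (⟨(a, b, c, k), d⟩ : Σ _ : ℕ × ℕ × ℕ × ℕ, ℕ) ∈ idx q₀ ↔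
    (a < q₀ ∧ b < 2 ∧ c < q₀ ∧ k < 2 * q₀ - 2) ∧
      d < q₀ * (2 * q₀ - 2 - k) - (a + b + c - k) := by
  simp [idx]

lemma F2_eq (q₀ q : ℕ) (h2 : 2 ≤ q₀) (hq : q = 2 * q₀ ^ 2) :
    F2 q₀ q = ((idx q₀).image (par q₀ q) : Finset ℕ) := by
  ext v
  simp only [F2, Set.mem_ofPred_eq, Finset.coe_image, Set.mem_image, Finset.mem_coe]
  constructor
  · rintro ⟨n, a, b, c, d, f, h1, hn, ha, hb, hc, hd, hs, rfl⟩
    obtain ⟨k, rfl⟩ : ∃ k, n = k + 1 := ⟨n - 1, by omega⟩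
    refine ⟨⟨(a, b, c, k), d⟩, ?_, ?_⟩
    · rw [mem_idx]
      refine ⟨by omega, ?_⟩
      obtain ⟨t, ht⟩ : ∃ t, 2 * q₀ - 2 - k = t := ⟨_, rfl⟩
      rw [ht]
      have : q₀ * t + k * q₀ + 2 * q₀ = q := by
        have : t + k + 2 = 2 * q₀ := by omega
        rw [hq]
        calc _ = q₀ * (t + k + 2) := by ring
          _ = _ := by rw [this]; ring
      have e : (k + 1) * q₀ = k * q₀ + q₀ := by ring
      rw [e] at hd hs
      omega
    · simp only [par]
      congr 3
      omega
  · rintro ⟨⟨⟨a, b, c, k⟩, d⟩, hx, rfl⟩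
    rw [mem_idx] at hx
    obtain ⟨⟨ha, hb, hc, hk⟩, hd⟩ := hx
    obtain ⟨t, ht⟩ : ∃ t, 2 * q₀ - 2 - k = t := ⟨_, rfl⟩
    rw [ht] at hd
    have : q₀ * t + k * q₀ + 2 * q₀ = q := by
      have : t + k + 2 = 2 * q₀ := by omega
      rw [hq]
      calc _ = q₀ * (t + k + 2) := by ring
        _ = _ := by rw [this]; ring
    have e : (k + 1) * q₀ = k * q₀ + q₀ := by ring
    refine ⟨k + 1, a, b, c, d, _, by omega, by omega, by omega, by omega, by omega, ?_, ?_, rfl⟩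
    · rw [e]; omega
    · simp only [e]; omega

lemma par_inj (q₀ q : ℕ) (h2 : 2 ≤ q₀) (hq : q = 2 * q₀ ^ 2) :
    Set.InjOn (par q₀ q) (idx q₀ : Set _) := by
  have key : ∀ k d w, k < 2 * q₀ - 2 → d < q₀ * (2 * q₀ - 2 - k) - (w - k) →
      d + (k + 2) * q₀ < q ∧
      (q + (k + 1) - q₀ - 2 - (k + 1) * q₀ - w - d) + d + (k + 2) * q₀ + 2 + w = q + (k + 1) := by
    intro k d w hk hd
    obtain ⟨t, ht⟩ : ∃ t, 2 * q₀ - 2 - k = t := ⟨_, rfl⟩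
    rw [ht] at hd
    have : q₀ * t + k * q₀ + 2 * q₀ = q := by
      have : t + k + 2 = 2 * q₀ := by omega
      rw [hq]
      calc _ = q₀ * (t + k + 2) := by ring
        _ = _ := by rw [this]; ring
    have e : (k + 1) * q₀ = k * q₀ + q₀ := by ring
    have e' : (k + 2) * q₀ = k * q₀ + 2 * q₀ := by ring
    rw [e, e']
    omega
  have rep : ∀ a b c d k f : ℕ, nuF q₀ q a b c d f + (k + 1 + 1) * q₀ * q + 1 =
      a + q₀ * (b + 2 * (c + q₀ * ((d + (k + 2) * q₀) + q * f))) + 1 := by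
    intro a b c d k f
    rw [nuF, hq]; ring
  rintro ⟨⟨a, b, c, k⟩, d⟩ hx ⟨⟨a', b', c', k'⟩, d'⟩ hx' h
  rw [Finset.mem_coe, mem_idx] at hx hx'
  obtain ⟨⟨ha, hb, hc, hk⟩, hd⟩ := hx
  obtain ⟨⟨ha', hb', hc', hk'⟩, hd'⟩ := hx'
  obtain ⟨u, v⟩ := key _ _ _ hk hd
  obtain ⟨u', v'⟩ := key _ _ _ hk' hd'
  simp only [par, rep] at h
  obtain ⟨rfl, h⟩ := digit_uniq ha ha' (Nat.succ_injective h)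
  obtain ⟨rfl, h⟩ := digit_uniq hb hb' h
  obtain ⟨rfl, h⟩ := digit_uniq hc hc' h
  obtain ⟨hM, h⟩ := digit_uniq u u' h
  have hkk : k = k' := by omega
  subst hkk
  have : d = d' := by omega
  subst this
  rfl

lemma inner1 (w N : ℕ) : 2 * ∑ n ∈ Finset.range N, ((w - n : ℕ) : ℚ) =
    w * (w + 1) - ((w - N : ℕ) : ℚ) * ((w - N : ℕ) + 1) := by
  induction N with
  | zero => simp
  | succ N ih =>
    rw [Finset.sum_range_succ, mul_add, ih]
    rcases Nat.lt_or_ge N w with h | h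
    · obtain ⟨r, rfl⟩ : ∃ r, w = N + 1 + r := ⟨w - N - 1, by omega⟩
      have e1 : N + 1 + r - N = r + 1 := by omega
      have e2 : N + 1 + r - (N + 1) = r := by omega
      rw [e1, e2]; push_cast; ring
    · have e1 : w - N = 0 := by omega
      have e2 : w - (N + 1) = 0 := by omega
      rw [e1, e2]; simp

lemma lin (c : ℚ) (N : ℕ) : 2 * ∑ n ∈ Finset.range N, (c - n) = 2 * N * c - N * (N - 1) := by
  induction N with
  | zero => simp
  | succ N ih =>
    rw [Finset.sum_range_succ, mul_add, ih]; push_cast; ring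

/-- fixed triple count -/
lemma inner2 (q₀ w : ℕ) (h2 : 2 ≤ q₀) (hw : w ≤ 2 * q₀ - 1) :
    2 * ∑ n ∈ Finset.range (2 * q₀ - 2),
      ((q₀ * (2 * q₀ - 2 - n) - (w - n) : ℕ) : ℚ) =
    q₀ * (2 * q₀ - 2) * (2 * q₀ - 1) - w * (w + 1) + (if w = 2 * q₀ - 1 then 2 else 0) := by
  have h : ∀ n ∈ Finset.range (2 * q₀ - 2), ((q₀ * (2 * q₀ - 2 - n) - (w - n) : ℕ) : ℚ) =
      q₀ * ((2 * q₀ - 2) - n) - ((w - n : ℕ) : ℚ) := by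
    intro n hn
    rw [Finset.mem_range] at hn
    obtain ⟨t, ht⟩ : ∃ t, 2 * q₀ - 2 - n = t + 1 := ⟨2 * q₀ - 2 - n - 1, by omega⟩
    have : w - n ≤ q₀ * (2 * q₀ - 2 - n) := by
      rw [ht]
      have : 2 * (t + 1) ≤ q₀ * (t + 1) := Nat.mul_le_mul_right _ h2
      omega
    rw [Nat.cast_sub this, ht]
    have e : 2 * q₀ = t + 1 + n + 2 := by omega
    have e' : (2 * q₀ : ℚ) = t + 1 + n + 2 := by exact_mod_cast e
    rw [e']; push_cast; ring
  rw [Finset.sum_congr rfl h, Finset.sum_sub_distrib, ← Finset.mul_sum, mul_sub, inner1,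
    mul_left_comm, lin]
  have e : ((2 * q₀ - 2 : ℕ) : ℚ) = 2 * q₀ - 2 := by
    rw [Nat.cast_sub (by omega)]; push_cast; ring
  rw [e]
  split_ifs with hh
  · have : w - (2 * q₀ - 2) = 1 := by omega
    rw [this]; push_cast; ring
  · have : w - (2 * q₀ - 2) = 0 := by omega
    rw [this]; push_cast; ring

lemma poly1 (c : ℚ) (N : ℕ) : 3 * ∑ x ∈ Finset.range N, (c + x) * (c + x + 1) =
    (N + c - 1) * (N + c) * (N + c + 1) - (c - 1) * c * (c + 1) := by
  induction N with
  | zero => simp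
  | succ N ih =>
    rw [Finset.sum_range_succ, mul_add, ih]; push_cast; ring

lemma poly2 (c : ℚ) (N : ℕ) : 4 * ∑ x ∈ Finset.range N, (c + x - 1) * (c + x) * (c + x + 1) =
    (N + c - 2) * (N + c - 1) * (N + c) * (N + c + 1) - (c - 2) * (c - 1) * c * (c + 1) := by
  induction N with
  | zero => simp
  | succ N ih =>
    rw [Finset.sum_range_succ, mul_add, ih]; push_cast; ring

lemma total (N : ℕ) : 6 * ∑ a ∈ Finset.range N, ∑ b ∈ Finset.range 2, ∑ c ∈ Finset.range N,
    (((a + b + c : ℕ) : ℚ) * ((a + b + c : ℕ) + 1)) = 2 * N ^ 2 * (7 * N ^ 2 - 1) := by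
  have h : ∀ a ∈ Finset.range N, ∑ b ∈ Finset.range 2, ∑ c ∈ Finset.range N,
    (((a + b + c : ℕ) : ℚ) * ((a + b + c : ℕ) + 1)) =
     (1 / 3) * ((((N : ℚ) + a - 1) * (N + a) * (N + a + 1)
        + ((N + 1 : ℚ) + a - 1) * (N + 1 + a) * (N + 1 + a + 1))
        - (((0 : ℚ) + a - 1) * (0 + a) * (0 + a + 1)
        + ((1 : ℚ) + a - 1) * (1 + a) * (1 + a + 1))) := by
    intro a _
    have h0 := poly1 a N
    have h1 := poly1 (a + 1) N
    rw [Finset.sum_range_succ, Finset.sum_range_one]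
    push_cast
    rw [add_zero]
    linear_combination (1 / 3) * h0 + (1 / 3) * h1
  rw [Finset.sum_congr rfl h, ← Finset.mul_sum, Finset.sum_sub_distrib, Finset.sum_add_distrib,
    Finset.sum_add_distrib]
  have p1 := poly2 N N
  have p2 := poly2 (N + 1) N
  have p3 := poly2 0 N
  have p4 := poly2 1 N
  linear_combination (1 / 2) * p1 + (1 / 2) * p2 - (1 / 2) * p3 - (1 / 2) * p4

lemma corner (N : ℕ) (h : 2 ≤ N) : ∑ a ∈ Finset.range N, ∑ b ∈ Finset.range 2,
    ∑ c ∈ Finset.range N, (if a + b + c = 2 * N - 1 then (2 : ℚ) else 0) = 2 := by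
  rw [Finset.sum_eq_single (N - 1), Finset.sum_eq_single 1, Finset.sum_eq_single (N - 1)]
  · rw [if_pos (by omega)]
  · intro c hc hne
    rw [Finset.mem_range] at hc
    rw [if_neg (by omega)]
  · intro h'; rw [Finset.mem_range] at h'; omega
  · intro b hb hne
    apply Finset.sum_eq_zero
    intro c hc
    rw [Finset.mem_range] at hb hc
    rw [if_neg (by omega)]
  · intro h'; rw [Finset.mem_range] at h'; omega
  · intro a ha hne
    apply Finset.sum_eq_zero
    intro b hb
    apply Finset.sum_eq_zero
    intro c hc
    rw [Finset.mem_range] at ha hb hc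
    rw [if_neg (by omega)]
  · intro h'; rw [Finset.mem_range] at h'; omega

lemma card_idx_s17 (q₀ : ℕ) (h2 : 2 ≤ q₀) : 2 * ((idx q₀).card : ℚ) =
    2 * q₀ ^ 2 * (q₀ * (2 * q₀ - 2) * (2 * q₀ - 1)) - (1 / 3) * q₀ ^ 2 * (7 * q₀ ^ 2 - 1) + 2 := by
  rw [idx, Finset.card_sigma]
  simp only [Finset.card_range, Finset.sum_product]
  push_cast only [Nat.cast_sum]
  simp only [Finset.mul_sum (a := (2 : ℚ))]
  have h : ∀ a ∈ Finset.range q₀, ∀ b ∈ Finset.range 2, ∀ c ∈ Finset.range q₀,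
      ∑ n ∈ Finset.range (2 * q₀ - 2),
        2 * ((q₀ * (2 * q₀ - 2 - n) - (a + b + c - n) : ℕ) : ℚ) =
      q₀ * (2 * q₀ - 2) * (2 * q₀ - 1) - (((a + b + c : ℕ) : ℚ) * ((a + b + c : ℕ) + 1))
        + (if a + b + c = 2 * q₀ - 1 then 2 else 0) := by
    intro a ha b hb c hc
    rw [Finset.mem_range] at ha hb hc
    rw [← Finset.mul_sum, inner2 q₀ _ h2 (by omega)]
  rw [Finset.sum_congr rfl fun a ha => Finset.sum_congr rfl fun b hb =>
    Finset.sum_congr rfl fun c hc => h a ha b hb c hc]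
  simp only [Finset.sum_add_distrib, Finset.sum_sub_distrib]
  rw [corner q₀ h2]
  have := total q₀
  simp only [Finset.sum_const, Finset.card_range, nsmul_eq_mul]
  push_cast at this ⊢
  linear_combination (-1 / 6) * this

/-- For `s ≥ 3`, the cardinality of `F₂` satisfies
`24·|F₂| = 24q₀q² − 43q² + 24q₀q + 2q + 24`, i.e.
`|F₂| = q₀q² − 43q²/24 + q₀q + q/12 + 1`. -/
theorem stmt_17 (s : ℕ) (hs : 3 ≤ s) (q₀ q : ℕ)
    (hq₀ : q₀ = 2 ^ s) (hq : q = 2 * q₀ ^ 2) :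
    24 * (F2 q₀ q).ncard = 24 * q₀ * q ^ 2 - 43 * q ^ 2 + 24 * q₀ * q + 2 * q + 24 := by
  have h2 : 2 ≤ q₀ := by
    rw [hq₀]
    calc 2 = 2 ^ 1 := by norm_num
      _ ≤ 2 ^ s := Nat.pow_le_pow_right (by norm_num) (by omega)
  rw [F2_eq q₀ q h2 hq, Set.ncard_coe_finset, Finset.card_image_of_injOn (par_inj q₀ q h2 hq)]
  have hc := card_idx_s17 q₀ h2
  have hle : 43 * q ^ 2 ≤ 24 * q₀ * q ^ 2 := by
    have : 43 ≤ 24 * q₀ := by omega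
    exact Nat.mul_le_mul_right _ this
  have goalQ : ((24 * (idx q₀).card : ℕ) : ℚ) =
      ((24 * q₀ * q ^ 2 - 43 * q ^ 2 + 24 * q₀ * q + 2 * q + 24 : ℕ) : ℚ) := by
    push_cast [Nat.cast_sub hle]
    rw [hq]
    push_cast
    linear_combination 12 * hc
  exact_mod_cast goalQ
end

section
/- Let s ≥ 3 be an integer, q₀ = 2^s and q = 2q₀². For nonnegative integers a₁,a₂,a₃,a₄,f write σ = a₁+a₂+a₃+a₄+f and ν = a₁ + a₂q₀ + 2a₃q₀ + a₄q + fq², and let F₃ = {ν+(2n+1)q₀q+n+2 : 0≤n≤q₀−2, 0≤a₁≤q₀−2−n, 0≤a₂≤1, 0≤a₃≤q₀−1, 0≤a₄≤q₀−1, f≥0, σ=q−q₀−2−2nq₀+n}. Then |F₃| = q²/4 − q·q₀/2, i.e. 4·|F₃| = q² − 2q·q₀. -/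
lemma digit_aux_s18 {m a b a' b' : ℕ} (h : a < m) (h' : a' < m)
    (e : a + m * b = a' + m * b') : a = a' ∧ b = b' := by
  have hm : 0 < m := by omega
  have h1 : a = a' := by
    have := congrArg (· % m) e
    simpa [Nat.add_mul_mod_self_left, Nat.mod_eq_of_lt h, Nat.mod_eq_of_lt h'] using this
  subst h1
  refine ⟨rfl, ?_⟩
  exact Nat.eq_of_mul_eq_mul_left hm (by omega)

lemma sum_aux (m : ℕ) : 2 * ∑ n ∈ Finset.range m, (m - n) = m * (m + 1) := by
  induction m with
  | zero => simp
  | succ k ih =>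
    rw [Finset.sum_range_succ']
    simp only [Nat.add_sub_add_right, Nat.sub_zero]
    rw [Nat.mul_add, ih]; ring

def paramS (q₀ : ℕ) : Finset ((Σ _ : ℕ, ℕ) × ℕ × ℕ × ℕ) :=
  ((Finset.range (q₀ - 1)).sigma (fun n => Finset.range (q₀ - 1 - n))) ×ˢ
    (Finset.range 2 ×ˢ (Finset.range q₀ ×ˢ Finset.range q₀))

def paramG (q₀ q : ℕ) (t : (Σ _ : ℕ, ℕ) × ℕ × ℕ × ℕ) : ℕ :=
  nuF q₀ q t.1.2 t.2.1 t.2.2.1 t.2.2.2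
    (q + t.1.1 - (t.1.2 + t.2.1 + t.2.2.1 + t.2.2.2 + q₀ + 2 + 2 * t.1.1 * q₀))
    + (2 * t.1.1 + 1) * q₀ * q + t.1.1 + 2

lemma F3_eq (q₀ q : ℕ) (hq : q = 2 * q₀ ^ 2) :
    F3 q₀ q = ((paramS q₀).image (paramG q₀ q) : Finset ℕ) := by
  ext v
  simp only [F3, Set.mem_ofPred_eq, Finset.coe_image, Set.mem_image, Finset.mem_coe, paramS,
    Finset.mem_product, Finset.mem_sigma, Finset.mem_range]
  constructor
  · rintro ⟨n, a₁, a₂, a₃, a₄, f, h1, h2, h3, h4, h5, h6, rfl⟩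
    refine ⟨(⟨n, a₁⟩, a₂, a₃, a₄), ⟨⟨?_, ?_⟩, ?_, ?_, ?_⟩, ?_⟩
    all_goals try dsimp only
    any_goals omega
    simp only [paramG]
    have : q + n - (a₁ + a₂ + a₃ + a₄ + q₀ + 2 + 2 * n * q₀) = f := by omega
    rw [this]
  · rintro ⟨⟨⟨n, a₁⟩, a₂, a₃, a₄⟩, ⟨⟨h1, h2⟩, h3, h4, h5⟩, rfl⟩
    dsimp only at h1 h2 h3 h4 h5
    refine ⟨n, a₁, a₂, a₃, a₄, _, by omega, by omega, by omega, by omega, by omega, ?_, rfl⟩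
    dsimp only
    have key : a₁ + a₂ + a₃ + a₄ + q₀ + 2 + 2 * n * q₀ ≤ q + n := by
      obtain ⟨k, rfl⟩ : ∃ k, q₀ = n + 2 + k := ⟨q₀ - n - 2, by omega⟩
      have h6 : a₁ + a₂ + a₃ + a₄ ≤ k + 1 + (n + 1 + k) + (n + 1 + k) := by omega
      subst hq
      nlinarith [Nat.zero_le (k * n), Nat.zero_le (k * k)]
    omega

lemma paramG_inj (q₀ q : ℕ) (hq : q = 2 * q₀ ^ 2) :
    Set.InjOn (paramG q₀ q) (paramS q₀) := by
  have expand : ∀ n a₁ a₂ a₃ a₄ f : ℕ,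
      nuF q₀ q a₁ a₂ a₃ a₄ f + (2 * n + 1) * q₀ * q + n + 2 =
      ((a₁ + n + 1) + q₀ * (a₂ + 2 * (a₃ + q₀ * (a₄ + q₀ * ((2 * n + 1) + (2 * q₀) * f))))) + 1 := by
    intros; subst hq; unfold nuF; ring
  rintro ⟨⟨n, a₁⟩, a₂, a₃, a₄⟩ h ⟨⟨n', a₁'⟩, a₂', a₃', a₄'⟩ h' e
  simp only [paramS, Finset.mem_coe, Finset.mem_product, Finset.mem_sigma, Finset.mem_range] at h h'
  obtain ⟨⟨h1, h2⟩, h3, h4, h5⟩ := h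
  obtain ⟨⟨h1', h2'⟩, h3', h4', h5'⟩ := h'
  simp only [paramG] at e
  rw [expand, expand] at e
  obtain ⟨e1, e⟩ := digit_aux_s18 (by omega) (by omega) (Nat.succ.inj e)
  obtain ⟨e2, e⟩ := digit_aux_s18 h3 h3' e
  obtain ⟨e3, e⟩ := digit_aux_s18 h4 h4' e
  obtain ⟨e4, e⟩ := digit_aux_s18 h5 h5' e
  obtain ⟨e5, e⟩ := digit_aux_s18 (by omega) (by omega) e
  obtain rfl : n = n' := by omega
  obtain rfl : a₁ = a₁' := by omega
  subst e2 e3 e4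
  rfl

/-- For `s ≥ 3`, the cardinality of `F₃` satisfies `4·|F₃| = q² − 2q·q₀`,
i.e. `|F₃| = q²/4 − q·q₀/2`. -/
theorem stmt_18 (s : ℕ) (hs : 3 ≤ s) (q₀ q : ℕ)
    (hq₀ : q₀ = 2 ^ s) (hq : q = 2 * q₀ ^ 2) :
    4 * (F3 q₀ q).ncard = q ^ 2 - 2 * q * q₀ := by
  rw [F3_eq q₀ q hq, Set.ncard_coe_finset, Finset.card_image_of_injOn (paramG_inj q₀ q hq)]
  have hpos : 0 < q₀ := by rw [hq₀]; positivity
  obtain ⟨m, rfl⟩ : ∃ m, q₀ = m + 1 := ⟨q₀ - 1, by omega⟩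
  simp only [paramS, Finset.card_product, Finset.card_sigma, Finset.card_range,
    Nat.add_sub_cancel]
  have h := sum_aux m
  symm
  apply Nat.sub_eq_of_eq_add
  subst hq
  generalize ∑ n ∈ Finset.range m, (m - n) = S at h
  have h2 : 4 * (S * (2 * ((m + 1) * (m + 1)))) = 4 * ((m + 1) * (m + 1)) * (2 * S) := by ring
  rw [h2, h]; ring
end
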